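/- Let Γ ⊆ ℝ^n, N ∈ ℕ, and let (F_ε)_{ε∈(0,1]} be a family of continuous functions F_ε : ℝ^n → ℂ such that for every l ∈ ℕ there is C_l > 0 with |F_ε(ξ)| ≤ C_l ε^{-N} ⟨ξ⟩^{-l} for all ξ ∈ Γ and ε ∈ (0,1]. Let p : ℝ^n → ℂ be measurable and bounded with p(ξ) = 0 for all ξ ∉ Γ. Then for every ε the function w_ε(x) := ∫_{ℝ^n} e^{i x·ξ} p(ξ) F_ε(ξ) dξ is a well-defined smooth function on ℝ^n, and for every multi-index α there is C > 0 with sup_{x∈ℝ^n} |∂^α w_ε(x)| ≤ C ε^{-N} for all ε ∈ (0,1]; in particular (w_ε)_ε satisfies the G^∞-estimates with the uniform exponent N. -/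

import Mathlib

/-!
Write `g_ε = p F_ε`, so that `w_ε` is the oscillatory integral `∫ e^{i x·ξ} g_ε(ξ) dξ`. As `p` is
bounded and vanishes off `Γ`, the hypothesis on `F_ε`, applied with `l = k + n + 1`, gives
`|ξ|^k |g_ε(ξ)| ≤ |B| C_l ε^{-N} ⟨ξ⟩^{-(n+1)}` on all of `ℝ^n` (`norm_pow_mul_cutoff_le`), and
`⟨ξ⟩^{-(n+1)}` is integrable (`integrable_jpow`). Hence every `|ξ|^k |g_ε|` is integrable, which
allows differentiation under the integral sign to all orders: up to the normalization of the
pairing, `w_ε` is a Mathlib `VectorFourier.fourierIntegral`, and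
`∂^α w_ε(x) = ∫ e^{i x·ξ} (iξ)^α g_ε(ξ) dξ` (`finD_oscInt`). The right-hand side is bounded,
uniformly in `x`, by `∫ |ξ|^{|α|} |g_ε(ξ)| dξ ≤ C ε^{-N}`.
-/


open MeasureTheory Set

noncomputable section

/-- The parameter range `(0,1]` for `ε`. -/
def Eps : Set ℝ := Set.Ioc 0 1

/-- The Euclidean norm `|ξ|` on `ℝ^n`. -/
def euclNorm {n : ℕ} (ξ : Fin n → ℝ) : ℝ := Real.sqrt (∑ i, ξ i ^ 2)

/-- `⟨ξ⟩^m = (1+|ξ|²)^{m/2}`. -/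
def jpow {n : ℕ} (m : ℝ) (ξ : Fin n → ℝ) : ℝ := (1 + ∑ i, ξ i ^ 2) ^ (m / 2)

/-- Strongly positive slow scale net. -/
def SlowScale (ω : ℝ → ℝ) : Prop :=
  (∃ c > 0, ∀ ε ∈ Eps, c ≤ ω ε) ∧
  ∀ p : ℝ, 0 ≤ p → ∃ c > 0, ∀ ε ∈ Eps, ω ε ^ p ≤ c * ε⁻¹

/-- Directional derivative. -/
def pderivV {E F : Type*} [NormedAddCommGroup E] [NormedSpace ℝ E]
    [NormedAddCommGroup F] [NormedSpace ℝ F] (v : E) (f : E → F) : E → F :=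
  fun x => fderiv ℝ f x v

/-- Iterated directional derivatives along a list of vectors. -/
def pderivL {E F : Type*} [NormedAddCommGroup E] [NormedSpace ℝ E]
    [NormedAddCommGroup F] [NormedSpace ℝ F] (vs : List E) (f : E → F) : E → F :=
  vs.foldr pderivV f

/-- Coordinate direction in the `x`-variable of `Ω × ℝ^n`. -/
def xdir {n : ℕ} (i : Fin n) : (Fin n → ℝ) × (Fin n → ℝ) := (Pi.single i 1, 0)

/-- Coordinate direction in the `ξ`-variable of `Ω × ℝ^n`. -/
def xidir {n : ℕ} (i : Fin n) : (Fin n → ℝ) × (Fin n → ℝ) := (0, Pi.single i 1)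

/-- `∂_ξ^α ∂_x^β f`, with multi-indices encoded as lists of coordinate directions. -/
def symD {n : ℕ} {F : Type*} [NormedAddCommGroup F] [NormedSpace ℝ F]
    (α β : List (Fin n)) (f : ((Fin n → ℝ) × (Fin n → ℝ)) → F) :
    ((Fin n → ℝ) × (Fin n → ℝ)) → F :=
  pderivL (α.map xidir ++ β.map xdir) f

/-- `∂^α f` for functions on `ℝ^n`. -/
def finD {n : ℕ} {F : Type*} [NormedAddCommGroup F] [NormedSpace ℝ F]
    (α : List (Fin n)) (f : (Fin n → ℝ) → F) : (Fin n → ℝ) → F :=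
  pderivL (α.map fun i => Pi.single i 1) f

/-- A conic subset of `ℝ^n ∖ {0}`. -/
def IsConic {n : ℕ} (Γ : Set (Fin n → ℝ)) : Prop :=
  (∀ ξ ∈ Γ, ξ ≠ 0) ∧ ∀ ξ ∈ Γ, ∀ t : ℝ, 0 < t → t • ξ ∈ Γ

/-- Slow scale net of symbols of order `m` on `Ω × ℝ^n`. -/
def IsSlowScaleSymbolNet {n : ℕ} (Ω : Set (Fin n → ℝ)) (m : ℝ)
    (a : ℝ → ((Fin n → ℝ) × (Fin n → ℝ)) → ℂ) : Prop :=
  (∀ ε ∈ Eps, ContDiffOn ℝ (⊤ : ℕ∞) (a ε) (Ω ×ˢ Set.univ)) ∧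
  ∀ K : Set (Fin n → ℝ), IsCompact K → K ⊆ Ω →
    ∃ ω : ℝ → ℝ, SlowScale ω ∧ ∀ α β : List (Fin n), ∃ c > 0, ∀ ε ∈ Eps, ∀ x ∈ K, ∀ ξ,
      ‖symD α β (a ε) (x, ξ)‖ ≤ c * ω ε * jpow (m - α.length) ξ

open scoped FourierTransform

/-- The pairing `(ξ, x) ↦ -(2π)⁻¹ x·ξ`, normalized so that `𝐞 (-(oscPairing n ξ x)) = e^{i x·ξ}`
for Mathlib's character `𝐞 t = e^{2πit}`. -/
def oscPairing (n : ℕ) : (Fin n → ℝ) →L[ℝ] (Fin n → ℝ) →L[ℝ] ℝ :=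
  -(2 * Real.pi)⁻¹ • ∑ i, (ContinuousLinearMap.proj (R := ℝ) (φ := fun _ : Fin n => ℝ) i).smulRight
    (ContinuousLinearMap.proj (R := ℝ) (φ := fun _ : Fin n => ℝ) i)

lemma oscPairing_apply {n : ℕ} (ξ x : Fin n → ℝ) :
    oscPairing n ξ x = -(2 * Real.pi)⁻¹ * ∑ i, x i * ξ i := by
  simp [oscPairing, mul_comm]

/-- The oscillatory integral `x ↦ ∫ e^{i x·ξ} g(ξ) dξ`. -/
def oscInt {n : ℕ} (g : (Fin n → ℝ) → ℂ) (x : Fin n → ℝ) : ℂ :=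
  ∫ ξ : Fin n → ℝ, Complex.exp (Complex.I * Complex.ofReal (∑ i, x i * ξ i)) * g ξ

lemma fourierChar_smul_eq {n : ℕ} (ξ x : Fin n → ℝ) (z : ℂ) :
    𝐞 (-((oscPairing n).toLinearMap₁₂ ξ x)) • z =
      Complex.exp (Complex.I * Complex.ofReal (∑ i, x i * ξ i)) * z := by
  have h : (oscPairing n).toLinearMap₁₂ ξ x = oscPairing n ξ x := rfl
  rw [h, oscPairing_apply, Circle.smul_def, Real.fourierChar_apply, smul_eq_mul]
  congr 2
  have hpi : (Real.pi : ℂ) ≠ 0 := by exact_mod_cast Real.pi_ne_zero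
  push_cast
  field_simp

lemma oscInt_eq_fourierIntegral {n : ℕ} (g : (Fin n → ℝ) → ℂ) :
    oscInt g = VectorFourier.fourierIntegral 𝐞 volume (oscPairing n).toLinearMap₁₂ g := by
  ext x
  simp only [oscInt, VectorFourier.fourierIntegral, fourierChar_smul_eq]

lemma norm_oscInt_le {n : ℕ} (g : (Fin n → ℝ) → ℂ) (x : Fin n → ℝ) :
    ‖oscInt g x‖ ≤ ∫ ξ, ‖g ξ‖ := by
  rw [oscInt_eq_fourierIntegral]
  exact VectorFourier.norm_fourierIntegral_le_integral_norm _ _ _ _ _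

/-- `g` is measurable and all its absolute moments are finite. -/
structure AllMoments {n : ℕ} (g : (Fin n → ℝ) → ℂ) : Prop where
  meas : AEStronglyMeasurable g
  moment : ∀ k : ℕ, Integrable (fun ξ : Fin n → ℝ => ‖ξ‖ ^ k * ‖g ξ‖)

namespace AllMoments

variable {n : ℕ} {g : (Fin n → ℝ) → ℂ}

lemma integrable (hg : AllMoments g) : Integrable g :=
  (integrable_norm_iff hg.meas).1 (by simpa using hg.moment 0)

lemma integrable_exp_mul (hg : AllMoments g) (x : Fin n → ℝ) :
    Integrable (fun ξ : Fin n → ℝ =>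
      Complex.exp (Complex.I * Complex.ofReal (∑ i, x i * ξ i)) * g ξ) := by
  have h := (VectorFourier.fourierIntegral_convergent_iff (μ := volume)
    (L := (oscPairing n).toLinearMap₁₂) Real.continuous_fourierChar
    (oscPairing n).continuous₂ x).2 hg.integrable
  refine h.congr (Filter.Eventually.of_forall fun ξ => ?_)
  exact fourierChar_smul_eq ξ x (g ξ)

lemma contDiff (hg : AllMoments g) : ContDiff ℝ (⊤ : ℕ∞) (oscInt g) := by
  rw [oscInt_eq_fourierIntegral]
  exact VectorFourier.contDiff_fourierIntegral _ fun k _ => hg.moment k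

lemma mul_coord (hg : AllMoments g) (i : Fin n) :
    AllMoments (fun ξ => Complex.I * (ξ i : ℂ) * g ξ) := by
  have hm : AEStronglyMeasurable (fun ξ : Fin n → ℝ => Complex.I * (ξ i : ℂ) * g ξ) :=
    (Continuous.aestronglyMeasurable (by fun_prop)).mul hg.meas
  refine ⟨hm, fun k => (hg.moment (k + 1)).mono' ?_ (Filter.Eventually.of_forall fun ξ => ?_)⟩
  · exact (Continuous.aestronglyMeasurable (by fun_prop)).mul hm.norm
  · have h : |ξ i| ≤ ‖ξ‖ := norm_le_pi_norm ξ i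
    simp only [norm_mul, norm_pow, Complex.norm_I, one_mul, Complex.norm_real,
      Real.norm_eq_abs, abs_abs, abs_norm, pow_succ, mul_assoc]
    gcongr

/-- Differentiation under the integral sign: `∂_i` acts as multiplication by `i ξ_i`. -/
lemma pderivV_oscInt (hg : AllMoments g) (i : Fin n) :
    pderivV (Pi.single i 1) (oscInt g) = oscInt (fun ξ => Complex.I * (ξ i : ℂ) * g ξ) := by
  have h1 : Integrable (fun ξ : Fin n → ℝ => ‖ξ‖ * ‖g ξ‖) := by simpa using hg.moment 1
  have hF : Integrable (VectorFourier.fourierSMulRight (oscPairing n) g) := by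
    refine (h1.const_mul (2 * Real.pi * ‖oscPairing n‖)).mono' hg.meas.fourierSMulRight
      (Filter.Eventually.of_forall fun ξ => ?_)
    simpa only [mul_assoc] using VectorFourier.norm_fourierSMulRight_le (oscPairing n) g ξ
  ext x
  rw [pderivV, oscInt_eq_fourierIntegral,
    VectorFourier.fderiv_fourierIntegral (oscPairing n) hg.integrable h1,
    VectorFourier.fourierIntegral_continuousLinearMap_apply Real.continuous_fourierChar hF,
    oscInt_eq_fourierIntegral]
  congr 1
  ext ξ
  have hs : ∑ j, (Pi.single i (1 : ℝ) : Fin n → ℝ) j * ξ j = ξ i := by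
    simp [Pi.single_apply]
  have hpi : (Real.pi : ℂ) ≠ 0 := by exact_mod_cast Real.pi_ne_zero
  rw [VectorFourier.fourierSMulRight_apply, oscPairing_apply, hs, Complex.real_smul, smul_eq_mul]
  push_cast
  field_simp

end AllMoments

/-- The symbol `(iξ)^α` of `∂^α`, the multi-index `α` being a list of coordinates. -/
def monom {n : ℕ} (α : List (Fin n)) (ξ : Fin n → ℝ) : ℂ :=
  (α.map fun i => Complex.I * (ξ i : ℂ)).prod

lemma norm_monom_le {n : ℕ} (α : List (Fin n)) (ξ : Fin n → ℝ) :
    ‖monom α ξ‖ ≤ ‖ξ‖ ^ α.length := by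
  induction α with
  | nil => simp [monom]
  | cons i α ih =>
    have h : |ξ i| ≤ ‖ξ‖ := norm_le_pi_norm ξ i
    have e : monom (i :: α) ξ = Complex.I * (ξ i : ℂ) * monom α ξ := by simp [monom]
    rw [e, List.length_cons, pow_succ', norm_mul, norm_mul, Complex.norm_I, one_mul,
      Complex.norm_real, Real.norm_eq_abs]
    gcongr

/-- `∂^α ∫ e^{i x·ξ} g(ξ) dξ = ∫ e^{i x·ξ} (iξ)^α g(ξ) dξ`; the moment condition on `(iξ)^α g` is
carried along because each step of the induction differentiates once more under the integral. -/
lemma finD_oscInt {n : ℕ} {g : (Fin n → ℝ) → ℂ} (hg : AllMoments g) (α : List (Fin n)) :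
    AllMoments (fun ξ => monom α ξ * g ξ) ∧
      finD α (oscInt g) = oscInt (fun ξ => monom α ξ * g ξ) := by
  induction α with
  | nil => simpa [monom, finD, pderivL] using hg
  | cons i α ih =>
    have e : (fun ξ => monom (i :: α) ξ * g ξ) =
        fun ξ => Complex.I * (ξ i : ℂ) * (monom α ξ * g ξ) := by
      ext ξ; simp [monom, mul_assoc]
    rw [e]
    refine ⟨ih.1.mul_coord i, ?_⟩
    rw [← ih.1.pderivV_oscInt i, ← ih.2]
    rfl

/-- The sup norm carried by `Fin n → ℝ` is dominated by the Euclidean norm. -/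
lemma norm_sq_le_sum_sq {n : ℕ} (ξ : Fin n → ℝ) : ‖ξ‖ ^ 2 ≤ ∑ i, ξ i ^ 2 := by
  have h0 : 0 ≤ ∑ i, ξ i ^ 2 := Finset.sum_nonneg fun i _ => sq_nonneg _
  have h : ‖ξ‖ ≤ Real.sqrt (∑ i, ξ i ^ 2) := by
    refine (pi_norm_le_iff_of_nonneg (Real.sqrt_nonneg _)).2 fun i => Real.le_sqrt_of_sq_le ?_
    rw [Real.norm_eq_abs, sq_abs]
    exact Finset.single_le_sum (f := fun i => ξ i ^ 2) (fun j _ => sq_nonneg _) (Finset.mem_univ i)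
  calc ‖ξ‖ ^ 2 ≤ Real.sqrt (∑ i, ξ i ^ 2) ^ 2 := by gcongr
    _ = _ := Real.sq_sqrt h0

lemma jpow_nonneg {n : ℕ} (m : ℝ) (ξ : Fin n → ℝ) : 0 ≤ jpow m ξ :=
  Real.rpow_nonneg (add_nonneg zero_le_one (Finset.sum_nonneg fun _ _ => sq_nonneg _)) _

lemma continuous_jpow {n : ℕ} (m : ℝ) : Continuous (jpow (n := n) m) := by
  refine Continuous.rpow_const (by fun_prop) fun ξ => Or.inl ?_
  have h0 : 0 ≤ ∑ i, ξ i ^ 2 := Finset.sum_nonneg fun i _ => sq_nonneg _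
  positivity

lemma integrable_jpow (n : ℕ) : Integrable (jpow (n := n) (-((n : ℝ) + 1))) := by
  have h : Integrable (fun ξ : Fin n → ℝ => ((1 : ℝ) + ‖ξ‖ ^ 2) ^ (-((n : ℝ) + 1) / 2)) :=
    integrable_rpow_neg_one_add_norm_sq (by simp)
  refine h.mono' (continuous_jpow _).aestronglyMeasurable (Filter.Eventually.of_forall fun ξ => ?_)
  rw [Real.norm_of_nonneg (jpow_nonneg _ _), jpow]
  refine Real.rpow_le_rpow_of_nonpos (by positivity) ?_ ?_
  · linarith [norm_sq_le_sum_sq ξ]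
  · have : (0 : ℝ) ≤ n := n.cast_nonneg
    linarith

lemma norm_pow_mul_jpow_le {n : ℕ} (k : ℕ) (m : ℝ) (ξ : Fin n → ℝ) :
    ‖ξ‖ ^ k * jpow (m - k) ξ ≤ jpow m ξ := by
  have h0 : 0 ≤ ∑ i, ξ i ^ 2 := Finset.sum_nonneg fun i _ => sq_nonneg _
  have hpos : 0 < 1 + ∑ i, ξ i ^ 2 := by positivity
  have h : ‖ξ‖ ^ k ≤ jpow k ξ := by
    calc ‖ξ‖ ^ k = (‖ξ‖ ^ 2) ^ ((k : ℝ) / 2) := by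
          rw [← Real.rpow_natCast ‖ξ‖ 2, ← Real.rpow_mul (norm_nonneg _), ← Real.rpow_natCast]
          congr 1
          push_cast
          ring
      _ ≤ _ := by
          refine Real.rpow_le_rpow (by positivity) ?_ (by positivity)
          linarith [norm_sq_le_sum_sq ξ]
  calc ‖ξ‖ ^ k * jpow (m - k) ξ ≤ jpow k ξ * jpow (m - k) ξ := by
        gcongr
        exact jpow_nonneg _ _
    _ = jpow m ξ := by
        rw [jpow, jpow, jpow, ← Real.rpow_add hpos]
        congr 1
        ring

/-- Off `Γ` the left-hand side vanishes, so the decay of `F_ε` on `Γ` controls every moment of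
`p F_ε` on the whole space, by an integrable function of `ξ` times `ε^{-N}`. -/
lemma norm_pow_mul_cutoff_le {n : ℕ} {Γ : Set (Fin n → ℝ)} {N : ℕ} {F : ℝ → (Fin n → ℝ) → ℂ}
    (hF : ∀ l : ℕ, ∃ C > 0, ∀ ε ∈ Eps, ∀ ξ ∈ Γ,
      ‖F ε ξ‖ ≤ C * ε ^ (-(N : ℤ)) * jpow (-(l : ℝ)) ξ)
    {p : (Fin n → ℝ) → ℂ} {B : ℝ} (hpb : ∀ ξ, ‖p ξ‖ ≤ B) (hp0 : ∀ ξ, ξ ∉ Γ → p ξ = 0) (k : ℕ) :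
    ∃ C > 0, ∀ ε ∈ Eps, ∀ ξ, ‖ξ‖ ^ k * ‖p ξ * F ε ξ‖ ≤
      C * ε ^ (-(N : ℤ)) * jpow (-((n : ℝ) + 1)) ξ := by
  have hB : 0 ≤ B := (norm_nonneg _).trans (hpb 0)
  obtain ⟨C, hC, h⟩ := hF (k + n + 1)
  -- `B + 1` rather than `B` keeps the constant positive when `B = 0`
  refine ⟨(B + 1) * C, by positivity, fun ε hε ξ => ?_⟩
  have hε0 : 0 < ε := hε.1
  by_cases hξ : ξ ∈ Γ
  · have hl : -((k + n + 1 : ℕ) : ℝ) = -((n : ℝ) + 1) - k := by push_cast; ring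
    have h1 := h ε hε ξ hξ
    rw [hl] at h1
    have h2 := norm_pow_mul_jpow_le k (-((n : ℝ) + 1)) ξ
    calc ‖ξ‖ ^ k * ‖p ξ * F ε ξ‖
        ≤ ‖ξ‖ ^ k * ((B + 1) * (C * ε ^ (-(N : ℤ)) * jpow (-((n : ℝ) + 1) - k) ξ)) := by
          rw [norm_mul]
          gcongr
          exact (hpb ξ).trans (by linarith)
      _ = (B + 1) * C * ε ^ (-(N : ℤ)) * (‖ξ‖ ^ k * jpow (-((n : ℝ) + 1) - k) ξ) := by ring
      _ ≤ _ := by gcongr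
  · rw [hp0 ξ hξ]
    have := jpow_nonneg (-((n : ℝ) + 1)) ξ
    simp only [zero_mul, norm_zero, mul_zero]
    positivity

/-- frequency cut-off of a Colombeau-rapidly-decreasing family yields a
smooth family satisfying the `G^∞`-estimates with uniform exponent `N`
(part of the proof of Theorem `theorem_wave_front`). -/
theorem statement8 {n : ℕ} (Γ : Set (Fin n → ℝ)) (N : ℕ)
    (F : ℝ → (Fin n → ℝ) → ℂ)
    (hFc : ∀ ε ∈ Eps, Continuous (F ε))
    (hF : ∀ l : ℕ, ∃ C > 0, ∀ ε ∈ Eps, ∀ ξ ∈ Γ,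
      ‖F ε ξ‖ ≤ C * ε ^ (-(N : ℤ)) * jpow (-(l : ℝ)) ξ)
    (p : (Fin n → ℝ) → ℂ) (hpm : Measurable p)
    (B : ℝ) (hpb : ∀ ξ, ‖p ξ‖ ≤ B)
    (hp0 : ∀ ξ, ξ ∉ Γ → p ξ = 0) :
    (∀ ε ∈ Eps, ∀ x : Fin n → ℝ,
      Integrable (fun ξ : Fin n → ℝ =>
        Complex.exp (Complex.I * Complex.ofReal (∑ i, x i * ξ i)) * p ξ * F ε ξ)) ∧
    (∀ ε ∈ Eps, ContDiff ℝ (⊤ : ℕ∞) (fun x : Fin n → ℝ =>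
      ∫ ξ : Fin n → ℝ,
        Complex.exp (Complex.I * Complex.ofReal (∑ i, x i * ξ i)) * p ξ * F ε ξ)) ∧
    (∀ α : List (Fin n), ∃ C > 0, ∀ ε ∈ Eps, ∀ x : Fin n → ℝ,
      ‖finD α (fun x : Fin n → ℝ =>
        ∫ ξ : Fin n → ℝ,
          Complex.exp (Complex.I * Complex.ofReal (∑ i, x i * ξ i)) * p ξ * F ε ξ) x‖ ≤
        C * ε ^ (-(N : ℤ))) := by
  have hbd := norm_pow_mul_cutoff_le hF hpb hp0
  have hw : ∀ ε, (fun x : Fin n → ℝ => ∫ ξ : Fin n → ℝ,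
      Complex.exp (Complex.I * Complex.ofReal (∑ i, x i * ξ i)) * p ξ * F ε ξ) =
      oscInt (fun ξ => p ξ * F ε ξ) := by
    intro ε; ext x; simp only [oscInt, mul_assoc]
  have hmom : ∀ ε ∈ Eps, AllMoments (fun ξ => p ξ * F ε ξ) := by
    intro ε hε
    have hm : AEStronglyMeasurable (fun ξ => p ξ * F ε ξ) :=
      hpm.aestronglyMeasurable.mul (hFc ε hε).aestronglyMeasurable
    refine ⟨hm, fun k => ?_⟩
    obtain ⟨C, -, h⟩ := hbd k
    refine ((integrable_jpow n).const_mul (C * ε ^ (-(N : ℤ)))).mono'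
      ((Continuous.aestronglyMeasurable (by fun_prop)).mul hm.norm)
      (Filter.Eventually.of_forall fun ξ => ?_)
    rw [Real.norm_of_nonneg (by positivity)]
    exact h ε hε ξ
  refine ⟨fun ε hε x => ?_, fun ε hε => ?_, fun α => ?_⟩
  · simpa only [mul_assoc] using (hmom ε hε).integrable_exp_mul x
  · rw [hw]
    exact (hmom ε hε).contDiff
  · obtain ⟨C, hC, h⟩ := hbd α.length
    have hI : 0 ≤ ∫ ξ : Fin n → ℝ, jpow (-((n : ℝ) + 1)) ξ :=
      integral_nonneg fun ξ => jpow_nonneg _ ξ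
    refine ⟨C * ((∫ ξ : Fin n → ℝ, jpow (-((n : ℝ) + 1)) ξ) + 1), by positivity,
      fun ε hε x => ?_⟩
    have hε0 : 0 < ε := hε.1
    obtain ⟨hα, hD⟩ := finD_oscInt (hmom ε hε) α
    rw [hw, hD]
    calc ‖oscInt (fun ξ => monom α ξ * (p ξ * F ε ξ)) x‖
        ≤ ∫ ξ, ‖monom α ξ * (p ξ * F ε ξ)‖ := norm_oscInt_le _ x
      _ ≤ ∫ ξ, C * ε ^ (-(N : ℤ)) * jpow (-((n : ℝ) + 1)) ξ := by
          refine integral_mono hα.integrable.norm ((integrable_jpow n).const_mul _) fun ξ => ?_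
          refine le_trans ?_ (h ε hε ξ)
          simp only [norm_mul (monom α ξ)]
          gcongr
          exact norm_monom_le α ξ
      _ = C * (∫ ξ : Fin n → ℝ, jpow (-((n : ℝ) + 1)) ξ) * ε ^ (-(N : ℤ)) := by
          rw [integral_const_mul]; ring
      _ ≤ _ := by
          gcongr
          linarith
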